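/- arXiv:2403.02849 — 6 statements merged into one kernel-verified Lean document; each statement's English description precedes it below -/
import Mathlib

section
/- For every countable abelian group G there exists an injective ℤ-linear map T : (ℕ →₀ ℤ) →ₗ[ℤ] (ℕ →₀ ℤ) such that the quotient (ℕ →₀ ℤ) ⧸ (LinearMap.range T) is isomorphic to G as an additive group. -/
/-!
Map `ℕ →₀ ℤ` onto `G` by sending the odd basis vectors to an enumeration of `G` and all the even
ones to `0`. The kernel `K` of this surjection is free by the classical leading-coefficient
argument: for each `n`, the `n`-th coordinates of the elements of `K` supported on `{0, …, n}` form
an ideal of `ℤ`; choosing for each `n` with nonzero ideal an element of `K` that realises the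
generator gives a triangular basis of `K` (`exists_triangular_parametrization`). The even basis
vectors lie in `K`, so infinitely many `n` occur, the basis is countably infinite, and `K` is the
image of an injective endomorphism of `ℕ →₀ ℤ`.
-/

/-- Every subgroup `K` of `ℕ →₀ ℤ` is free, with a basis indexed by the set `I` of leading indices
of elements of `K`. The last conjunct, that `I` contains the index of each standard basis vector
lying in `K`, serves to show that `I` is infinite. -/
theorem exists_triangular_parametrization (K : Submodule ℤ (ℕ →₀ ℤ)) :
    ∃ (I : Set ℕ) (S : (I →₀ ℤ) →ₗ[ℤ] (ℕ →₀ ℤ)), Function.Injective S ∧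
      LinearMap.range S = K ∧ ∀ n, Finsupp.single n 1 ∈ K → n ∈ I := by
  -- `J n` is the ideal of leading coefficients at index `n`.
  let J : ℕ → Submodule ℤ ℤ := fun n =>
    (K ⊓ Finsupp.supported ℤ ℤ (Set.Iic n)).map (Finsupp.lapply n)
  let d : ℕ → ℤ := fun n => Submodule.IsPrincipal.generator (J n)
  have hd : ∀ n, d n ∈ J n := fun n => Submodule.IsPrincipal.generator_mem (J n)
  have hr : ∀ n, ∃ r ∈ K, (∀ m, n < m → r m = 0) ∧ r n = d n := by
    intro n
    obtain ⟨r, ⟨hrK, hrs⟩, hrn⟩ := Submodule.mem_map.1 (hd n)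
    refine ⟨r, hrK, fun m hm => ?_, hrn⟩
    exact (Finsupp.mem_supported' ℤ r).1 hrs m (by simpa using hm)
  choose r hrK hrs hrn using hr
  have hJ : ∀ x ∈ K, ∀ n, (∀ m, n < m → x m = 0) → ∃ k : ℤ, x n = k * d n := by
    intro x hx n hxs
    have hmem : x n ∈ J n := Submodule.mem_map.2
      ⟨x, ⟨hx, (Finsupp.mem_supported' ℤ x).2 fun m hm => hxs m (by simpa using hm)⟩, rfl⟩
    obtain ⟨k, hk⟩ := (Submodule.IsPrincipal.mem_iff_eq_smul_generator (J n)).1 hmem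
    exact ⟨k, hk⟩
  let I : Set ℕ := {n | d n ≠ 0}
  let S : (I →₀ ℤ) →ₗ[ℤ] (ℕ →₀ ℤ) := Finsupp.linearCombination ℤ fun i : I => r i
  refine ⟨I, S, ?_, le_antisymm ?_ ?_, ?_⟩
  · refine (injective_iff_map_eq_zero S).2 fun c hc => ?_
    by_contra hne
    have hsupp : c.support.Nonempty := Finsupp.support_nonempty_iff.2 hne
    obtain ⟨m, hm, hmax⟩ := c.support.exists_maximal hsupp
    -- At the largest index `m` of `c`, only the `m`-th summand of `S c` contributes.
    have h : (S c) m = c m * d m := by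
      simp only [S, Finsupp.linearCombination_apply, Finsupp.sum, Finsupp.finsetSum_apply,
        Finsupp.smul_apply, smul_eq_mul]
      rw [Finset.sum_eq_single m, hrn]
      · intro i hi him
        have hlt : i < m := lt_of_le_of_ne
          (not_lt.1 fun hlt => absurd (hmax hi hlt.le) (not_le.2 hlt)) him
        rw [hrs i m hlt, mul_zero]
      · exact fun h => absurd hm h
    rw [hc, Finsupp.zero_apply] at h
    rcases mul_eq_zero.1 h.symm with h | h
    · exact Finsupp.mem_support_iff.1 hm h
    · exact m.2 h
  · rintro _ ⟨c, rfl⟩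
    exact Submodule.sum_mem _ fun i _ => K.smul_mem _ (hrK i)
  · have key : ∀ n, ∀ x ∈ K, (∀ m, n ≤ m → x m = 0) → x ∈ LinearMap.range S := by
      intro n
      induction n with
      | zero =>
        intro x _ hx
        have : x = 0 := Finsupp.ext fun m => hx m (Nat.zero_le m)
        rw [this]
        exact Submodule.zero_mem _
      | succ n ih =>
        intro x hx hxs
        obtain ⟨k, hk⟩ := hJ x hx n fun m hm => hxs m hm
        by_cases hdn : d n = 0
        · refine ih x hx fun m hm => ?_
          rcases hm.eq_or_lt with rfl | hlt
          · rw [hk, hdn, mul_zero]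
          · exact hxs m hlt
        · have h1 : x - k • r n ∈ LinearMap.range S := by
            refine ih _ (K.sub_mem hx (K.smul_mem k (hrK n))) fun m hm => ?_
            rcases hm.eq_or_lt with rfl | hlt
            · simp [hk, hrn]
            · simp [hxs m hlt, hrs n m hlt]
          have h2 : r n ∈ LinearMap.range S :=
            ⟨Finsupp.single ⟨n, hdn⟩ 1, by simp [S]⟩
          have h3 := Submodule.add_mem _ h1 (Submodule.smul_mem _ k h2)
          rwa [sub_add_cancel] at h3
    intro x hx
    refine key (x.support.sup id + 1) x hx fun m hm => ?_
    by_contra hne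
    have : m ≤ x.support.sup id :=
      Finset.le_sup (f := id) (Finsupp.mem_support_iff.2 hne)
    omega
  · intro n hn hdn
    obtain ⟨k, hk⟩ := hJ _ hn n fun m hm => by simp [hm.ne]
    rw [hdn] at hk
    simp at hk

/-- Every countable abelian group is the cokernel of an injective endomorphism of the
free abelian group `ℕ →₀ ℤ` on countably many generators. -/
theorem stmt_0 (G : Type*) [AddCommGroup G] [Countable G] :
    ∃ T : (ℕ →₀ ℤ) →ₗ[ℤ] (ℕ →₀ ℤ), Function.Injective T ∧
      Nonempty (((ℕ →₀ ℤ) ⧸ LinearMap.range T) ≃+ G) := by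
  obtain ⟨f, hf⟩ := exists_surjective_nat G
  let φ : (ℕ →₀ ℤ) →ₗ[ℤ] G :=
    Finsupp.linearCombination ℤ fun n => if Even n then 0 else f (n / 2)
  have hφ : Function.Surjective φ := by
    intro g
    obtain ⟨k, rfl⟩ := hf g
    refine ⟨Finsupp.single (2 * k + 1) 1, ?_⟩
    have h : (2 * k + 1) / 2 = k := by omega
    simp [φ, h]
  obtain ⟨I, S, hS, hrange, hI⟩ := exists_triangular_parametrization (LinearMap.ker φ)
  have hinf : I.Infinite := by
    refine Set.infinite_of_injective_forall_mem (f := fun k : ℕ => 2 * k)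
      (fun a b h => by simpa using h) fun k => hI _ ?_
    simp [φ]
  have : Infinite I := hinf.to_subtype
  obtain ⟨e⟩ := nonempty_equiv_of_countable (α := ℕ) (β := I)
  let E : (ℕ →₀ ℤ) ≃ₗ[ℤ] (I →₀ ℤ) := Finsupp.domLCongr e
  refine ⟨S ∘ₗ E.toLinearMap, hS.comp E.injective, ⟨?_⟩⟩
  have hT : LinearMap.range (S ∘ₗ E.toLinearMap) = LinearMap.ker φ := by
    rw [LinearMap.range_comp_of_range_eq_top _ (LinearEquiv.range E), hrange]
  exact ((Submodule.quotEquivOfEq _ _ hT).trans (φ.quotKerEquivOfSurjective hφ)).toAddEquiv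
end

section
/- Let R be a commutative ring, M an R-module, T, Y : M →ₗ[R] M linear endomorphisms, and c ∈ R. Define F : M × M →ₗ[R] M × M by F (x, y) = (−(c • x) − T y − c • (Y y), −x − Y y). Then the kernel of F is isomorphic as an R-module to the kernel of T; in particular, F is injective if and only if T is injective. -/
/-- Proposition 5.5(2): the kernel of `F` is isomorphic to the kernel of `T`;
in particular `F` is injective iff `T` is injective. -/
theorem stmt_2 (R : Type*) [CommRing R] (M : Type*) [AddCommGroup M] [Module R M]
    (T Y : M →ₗ[R] M) (c : R)
    (F : M × M →ₗ[R] M × M)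
    (hF : ∀ x y : M, F (x, y) = (-(c • x) - T y - c • (Y y), -x - Y y)) :
    Nonempty ((LinearMap.ker F) ≃ₗ[R] (LinearMap.ker T)) ∧
      (Function.Injective F ↔ Function.Injective T) := by
  -- The second coordinate of `F (x, y) = 0` forces `x = -Y y`; the `c`-terms of the first
  -- coordinate then cancel, leaving `T y = 0`.
  have key : ∀ x y : M, F (x, y) = 0 ↔ x = -Y y ∧ T y = 0 := by
    intro x y
    rw [hF, Prod.mk_eq_zero]
    constructor
    · rintro ⟨h1, h2⟩
      have hx : x = -Y y := by
        rw [← sub_eq_zero, ← neg_eq_zero, ← h2]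
        abel
      subst hx
      refine ⟨rfl, ?_⟩
      rw [← neg_eq_zero, ← h1, smul_neg]
      abel
    · rintro ⟨rfl, h⟩
      simp [h]
  -- Hence `(x, y) ↦ y` restricts to an isomorphism of kernels, with inverse `y ↦ (-Y y, y)`.
  let e : LinearMap.ker F ≃ₗ[R] LinearMap.ker T :=
    { toFun := fun p => ⟨p.1.2, ((key p.1.1 p.1.2).1 p.2).2⟩
      map_add' := fun _ _ => rfl
      map_smul' := fun _ _ => rfl
      invFun := fun y => ⟨(-Y y.1, y.1), (key _ _).2 ⟨rfl, y.2⟩⟩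
      left_inv := fun p =>
        Subtype.ext (Prod.ext ((key p.1.1 p.1.2).1 p.2).1.symm rfl)
      right_inv := fun _ => rfl }
  refine ⟨⟨e⟩, ?_⟩
  rw [← LinearMap.ker_eq_bot, ← LinearMap.ker_eq_bot, ← Submodule.subsingleton_iff_eq_bot,
    ← Submodule.subsingleton_iff_eq_bot]
  exact e.toEquiv.subsingleton_congr
end

section
/- Let R be a commutative ring, M an R-module, T, Y : M →ₗ[R] M linear endomorphisms, and c ∈ R. Define F : M × M →ₗ[R] M × M by F (x, y) = (−(c • x) − T y − c • (Y y), −x − Y y). Then the cokernel (M × M) ⧸ (LinearMap.range F) is isomorphic as an R-module to M ⧸ (LinearMap.range T). -/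
/-- Proposition 5.5(3): the cokernel of `F` is isomorphic to the cokernel of `T`. -/
theorem stmt_3 (R : Type*) [CommRing R] (M : Type*) [AddCommGroup M] [Module R M]
    (T Y : M →ₗ[R] M) (c : R)
    (F : M × M →ₗ[R] M × M)
    (hF : ∀ x y : M, F (x, y) = (-(c • x) - T y - c • (Y y), -x - Y y)) :
    Nonempty (((M × M) ⧸ LinearMap.range F) ≃ₗ[R] (M ⧸ LinearMap.range T)) := by
  -- The row operation `(a, b) ↦ a - c • b` sends `F (x, y)` to `-T y`, so modulo `range T` it is
  -- a surjection from `M × M` whose kernel turns out to be exactly `range F`.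
  let g : M × M →ₗ[R] M ⧸ LinearMap.range T :=
    (LinearMap.range T).mkQ ∘ₗ (LinearMap.fst R M M - c • LinearMap.snd R M M)
  have hg : ∀ a b : M, g (a, b) = (LinearMap.range T).mkQ (a - c • b) := fun _ _ => rfl
  have hsurj : Function.Surjective g := by
    intro q
    obtain ⟨m, rfl⟩ := (LinearMap.range T).mkQ_surjective q
    exact ⟨(m, 0), by rw [hg, smul_zero, sub_zero]⟩
  have hker : LinearMap.range F = LinearMap.ker g := by
    ext ⟨a, b⟩
    rw [LinearMap.mem_ker, hg, Submodule.mkQ_apply, Submodule.Quotient.mk_eq_zero]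
    constructor
    · rintro ⟨⟨x, y⟩, h⟩
      rw [hF, Prod.mk.injEq] at h
      obtain ⟨rfl, rfl⟩ := h
      refine ⟨-y, ?_⟩
      rw [map_neg]
      module
    · rintro ⟨z, hz⟩
      -- The second coordinate forces `x = -b - Y y`, and the first one then forces `T y = -T z`.
      refine ⟨(-b + Y z, -z), ?_⟩
      rw [hF, map_neg, map_neg, hz, Prod.mk.injEq]
      constructor <;> module
  exact ⟨(Submodule.quotEquivOfEq _ _ hker).trans (g.quotKerEquivOfSurjective hsurj)⟩
end

section
/- Let T, S : Matrix ℕ ℕ ℤ. Define X : Matrix ℕ ℕ ℤ by X k l = 1 if |k − l| = 1 and X k l = 0 otherwise, let |T| and |S| denote the entrywise absolute values of T and S, and set Y = 2 • |T| + |S| + X. Let N = Matrix.fromBlocks (2 • 1) (T + Y) 1 (1 + Y) and M = Matrix.fromBlocks (3 • 1) (S + 2 • Y) 1 (1 + Y), matrices indexed by ℕ ⊕ ℕ with entries in ℤ. Then every entry of N is nonnegative, and for all indices i, j : ℕ ⊕ ℕ one has N i j = 0 if and only if M i j = 0. -/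
/-- The matrices `N` and `M` of Construction 5.4: `N` has nonnegative entries, and
`N i j = 0 ↔ M i j = 0` for all indices (Proposition 5.5(1)). -/
theorem stmt_4 (T S : Matrix ℕ ℕ ℤ)
    (X : Matrix ℕ ℕ ℤ)
    (hX : ∀ k l : ℕ, X k l = if |(k : ℤ) - (l : ℤ)| = 1 then 1 else 0)
    (Tabs Sabs : Matrix ℕ ℕ ℤ)
    (hT : ∀ k l : ℕ, Tabs k l = |T k l|)
    (hS : ∀ k l : ℕ, Sabs k l = |S k l|)
    (Y : Matrix ℕ ℕ ℤ) (hY : Y = 2 • Tabs + Sabs + X)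
    (N M : Matrix (ℕ ⊕ ℕ) (ℕ ⊕ ℕ) ℤ)
    (hN : N = Matrix.fromBlocks (2 • (1 : Matrix ℕ ℕ ℤ)) (T + Y) 1 (1 + Y))
    (hM : M = Matrix.fromBlocks (3 • (1 : Matrix ℕ ℕ ℤ)) (S + 2 • Y) 1 (1 + Y)) :
    (∀ i j : ℕ ⊕ ℕ, 0 ≤ N i j) ∧ (∀ i j : ℕ ⊕ ℕ, N i j = 0 ↔ M i j = 0) := by
  -- An entry of `T + Y` or of `S + 2 • Y` vanishes exactly when the corresponding entries of
  -- `T`, `S` and `X` all do, because the absolute values in `Y` dominate `T` and `S`.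
  have hX0 : ∀ k l, 0 ≤ X k l := fun k l => by rw [hX]; split_ifs <;> norm_num
  have hYe : ∀ k l, Y k l = 2 * |T k l| + |S k l| + X k l := fun k l => by
    simp [hY, hT, hS]
  have h1 : ∀ k l, 0 ≤ (1 : Matrix ℕ ℕ ℤ) k l := fun k l => by
    rw [Matrix.one_apply]; split_ifs <;> norm_num
  subst hN hM
  constructor
  · rintro (k | k) (l | l) <;>
      simp only [Matrix.fromBlocks_apply₁₁, Matrix.fromBlocks_apply₁₂, Matrix.fromBlocks_apply₂₁,
        Matrix.fromBlocks_apply₂₂, Matrix.add_apply, Matrix.smul_apply, hYe, nsmul_eq_mul] <;>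
      have := h1 k l <;> have := hX0 k l <;> push_cast <;> grind
  · rintro (k | k) (l | l) <;>
      simp only [Matrix.fromBlocks_apply₁₁, Matrix.fromBlocks_apply₁₂, Matrix.fromBlocks_apply₂₁,
        Matrix.fromBlocks_apply₂₂, Matrix.add_apply, Matrix.smul_apply, hYe, nsmul_eq_mul] <;>
      have := hX0 k l <;> push_cast <;> grind
end

section
/- Define X : Matrix ℕ ℕ ℤ by X k l = 1 if |k − l| = 1 and X k l = 0 otherwise, and let A = Matrix.fromBlocks 1 X 1 X, a matrix indexed by ℕ ⊕ ℕ with entries in ℤ. Then the directed graph on vertex set ℕ ⊕ ℕ with an edge from i to j whenever A i j ≠ 0 is strongly connected: for all vertices i, j there exist n : ℕ and vertices v₀ = i, v₁, …, vₙ = j with A v_k v_{k+1} ≠ 0 for every k < n. -/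
/-!
Writing `inl`, `inr` for the two copies of `ℕ`, the edges are `inl k → inl k`, `inr k → inl k`, and
`inl k → inr l`, `inr k → inr l` for `|k - l| = 1`. Hence the second copy is a two-way infinite path,
so any `inr k` reaches any `inr l`. Every vertex of the first copy enters the second one by
`inl k → inr (k + 1)`, and is entered from it by `inr l → inl l`, so all vertices reach each other.
-/

theorem exists_walk_of_reflTransGen {V : Type*} {r : V → V → Prop} {a b : V}
    (h : Relation.ReflTransGen r a b) :
    ∃ (n : ℕ) (v : ℕ → V), v 0 = a ∧ v n = b ∧ ∀ k < n, r (v k) (v (k + 1)) := by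
  induction h using Relation.ReflTransGen.head_induction_on with
  | refl => exact ⟨0, fun _ => b, rfl, rfl, by simp⟩
  | @head a c hac _ ih =>
    obtain ⟨n, v, h0, hn, hv⟩ := ih
    refine ⟨n + 1, fun m => Nat.casesOn m a v, rfl, hn, ?_⟩
    rintro (_ | k) hk
    · simpa [h0] using hac
    · exact hv k (by omega)

/-- Remark 5.7 / Proposition 5.8: the directed graph on `ℕ ⊕ ℕ` whose adjacency matrix is
`fromBlocks 1 X 1 X` is strongly connected. -/
theorem stmt_5 (X : Matrix ℕ ℕ ℤ)
    (hX : ∀ k l : ℕ, X k l = if |(k : ℤ) - (l : ℤ)| = 1 then 1 else 0)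
    (A : Matrix (ℕ ⊕ ℕ) (ℕ ⊕ ℕ) ℤ)
    (hA : A = Matrix.fromBlocks (1 : Matrix ℕ ℕ ℤ) X 1 X) :
    ∀ i j : ℕ ⊕ ℕ, ∃ (n : ℕ) (v : ℕ → ℕ ⊕ ℕ), v 0 = i ∧ v n = j ∧
      ∀ k < n, A (v k) (v (k + 1)) ≠ 0 := by
  subst hA
  intro i j
  apply exists_walk_of_reflTransGen
    (r := fun a b => Matrix.fromBlocks (1 : Matrix ℕ ℕ ℤ) X 1 X a b ≠ 0)
  set r : ℕ ⊕ ℕ → ℕ ⊕ ℕ → Prop :=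
    fun a b => Matrix.fromBlocks (1 : Matrix ℕ ℕ ℤ) X 1 X a b ≠ 0 with hr
  have up (k : ℕ) : r (.inr k) (.inr (k + 1)) := by simp [hr, hX]
  have down (k : ℕ) : r (.inr (k + 1)) (.inr k) := by simp [hr, hX]
  have enter (k : ℕ) : r (.inl k) (.inr (k + 1)) := by simp [hr, hX]
  have leave (k : ℕ) : r (.inr k) (.inl k) := by simp [hr]
  have to_zero (k : ℕ) : Relation.ReflTransGen r (.inr k) (.inr 0) := by
    induction k with
    | zero => exact .refl
    | succ k ih => exact ih.head (down k)
  have from_zero (k : ℕ) : Relation.ReflTransGen r (.inr 0) (.inr k) := by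
    induction k with
    | zero => exact .refl
    | succ k ih => exact ih.tail (up k)
  have source : Relation.ReflTransGen r i (.inr 0) := by
    rcases i with k | k
    · exact (to_zero (k + 1)).head (enter k)
    · exact to_zero k
  have target : Relation.ReflTransGen r (.inr 0) j := by
    rcases j with l | l
    · exact (from_zero l).tail (leave l)
    · exact from_zero l
  exact source.trans target
end

section
/- Let V be a type with a quiver structure, let v : V, and let F be a finite set of finite paths starting at v (elements of the sigma type Σ w, Quiver.Path v w) such that every finite path starting at v has a common extension with some element of F (i.e. F is exhaustive). Let n be the maximum of the lengths of the paths in F. Then every path q starting at v with q.length = n satisfies λ ≤ q for some λ ∈ F, i.e. q = λ.comp w for some λ ∈ F and some path w. -/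
universe u

/-- Two initial segments of a common path are comparable: the shorter one is an initial segment
of the longer one. The final edges of the two complementary segments `w₁` and `w₂` agree and are
stripped off until `w₁` is empty; `w₂` cannot run out first, by the length hypothesis. -/
theorem exists_eq_comp_of_comp_eq_comp {V : Type*} [Quiver V] {a b c d : V}
    (p : Quiver.Path a b) (q : Quiver.Path a c) (w₁ : Quiver.Path c d) (w₂ : Quiver.Path b d)
    (h : q.comp w₁ = p.comp w₂) (hlen : p.length ≤ q.length) :
    ∃ w : Quiver.Path b c, q = p.comp w := by
  induction w₁ with
  | nil => exact ⟨w₂, h⟩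
  | cons w₁ e ih =>
    cases w₂ with
    | nil =>
      have := congrArg Quiver.Path.length h
      simp only [Quiver.Path.length_comp, Quiver.Path.length_cons, Quiver.Path.length_nil] at this
      omega
    | cons w₂ f =>
      rw [Quiver.Path.comp_cons, Quiver.Path.comp_cons] at h
      obtain rfl := Quiver.Path.obj_eq_of_cons_eq_cons h
      exact ih w₂ (eq_of_heq (Quiver.Path.heq_of_cons_eq_cons h))

/-- The intermediate claim in the verification of (S4) in Proposition 4.7: if `F` is a
finite exhaustive set of paths out of `v` and `n` is the maximal length occurring in `F`,
then every path out of `v` of length `n` extends an element of `F`. -/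
theorem stmt_11 {V : Type u} [Quiver.{u + 1} V] (v : V)
    (F : Set (Σ w : V, Quiver.Path v w)) (hFfin : F.Finite)
    (hex : ∀ p : Σ w : V, Quiver.Path v w, ∃ l ∈ F, ∃ (d : V) (r : Quiver.Path v d)
      (w₁ : Quiver.Path p.1 d) (w₂ : Quiver.Path l.1 d),
        r = p.2.comp w₁ ∧ r = l.2.comp w₂)
    (n : ℕ)
    (hn : IsGreatest {k : ℕ | ∃ l ∈ F, (l.2 : Quiver.Path v l.1).length = k} n)
    {c : V} (q : Quiver.Path v c) (hq : q.length = n) :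
    ∃ l ∈ F, ∃ w : Quiver.Path l.1 c, q = l.2.comp w := by
  obtain ⟨l, hl, d, r, w₁, w₂, h₁, h₂⟩ := hex ⟨c, q⟩
  exact ⟨l, hl, exists_eq_comp_of_comp_eq_comp l.2 q w₁ w₂ (h₁.symm.trans h₂)
    (hq ▸ hn.2 ⟨l, hl, rfl⟩)⟩
end
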